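/- For every y ∈ (𝒫 ∪ 𝒜') \ E one has d(y, E) ≤ (n√r / 2 + 1) · max{d(y, 𝒫), d(y, 𝒜')}; consequently the condition number κ* := sup{ d(y,E) / max{d(y,𝒫), d(y,𝒜')} : y ∈ (𝒫 ∪ 𝒜') \ E } satisfies κ* ≤ n√r / 2 + 1. -/

import Mathlib

open Finset

/-- A set function `g` on subsets of `V` is submodular. -/
def Submodular {V : Type*} [DecidableEq V] (g : Finset V → ℝ) : Prop :=
  ∀ X Y : Finset V, g X + g Y ≥ g (X ∪ Y) + g (X ∩ Y)

/-- `x` belongs to the base polytope `B(g)` of the set function `g`. -/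
def InBasePolytope {V : Type*} [Fintype V] (g : Finset V → ℝ) (x : V → ℝ) : Prop :=
  (∀ S : Finset V, ∑ v ∈ S, x v ≤ g S) ∧ (∑ v, x v = g Finset.univ)

/-- Euclidean norm of a finitely indexed real vector. -/
noncomputable def norm2 {ι : Type*} [Fintype ι] (x : ι → ℝ) : ℝ :=
  Real.sqrt (∑ i, x i ^ 2)

/-- Euclidean distance from a point to a set of vectors. -/
noncomputable def distSet {ι : Type*} [Fintype ι] (y : ι → ℝ) (K : Set (ι → ℝ)) : ℝ :=
  sInf ((fun z => norm2 (y - z)) '' K)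

/-!
Let `z` be the point of `E` nearest to `x ∈ 𝒫`, and `d = z - x`. Draw an arc `v → u` when some
block has `d i v < 0 < d i u` and can feasibly move mass from `u` to `v`. The moves along a cycle
of arcs would add up to a feasible descent direction inside `𝒜'`, so the arcs are acyclic and `V`
can be ordered along them. The exchange property of base polytopes then makes every prefix sum of
every `d i` nonpositive, so prefix sums of different blocks do not cancel, and a discrete Wirtinger
inequality with constant `n ^ 2 / 8` gives `∑ i, ‖d i‖ ^ 2 ≤ n ^ 2 / 4 * ‖∑ i, d i‖ ^ 2`.
Cauchy–Schwarz over the `r` blocks costs the factor `√r`. From a point of `𝒜'` one first steps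
to `𝒫`, which costs the extra `1`.

That `E` is nonempty follows by minimising `‖A y - s‖` over `𝒫`: at a minimiser, the set where
`A y < s` is tight for every block, hence empty.
-/

open scoped Topology Matrix

lemma picone_two_point {a b s t : ℝ} (hs : 0 ≤ s) (ht : 0 ≤ t) (ha : t = 0 → a = 0)
    (hb : s = 0 → b = 0) :
    a ^ 2 * (1 - s / t) + b ^ 2 * (1 - t / s) ≤ (a - b) ^ 2 := by
  rcases ht.eq_or_lt' with rfl | ht
  · simp [ha rfl]
  rcases hs.eq_or_lt' with rfl | hs
  · simp [hb rfl]
  have hsq : (a - b) ^ 2 - (a ^ 2 * (1 - s / t) + b ^ 2 * (1 - t / s)) =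
      (a * s - b * t) ^ 2 / (s * t) := by
    field_simp
    ring
  have : 0 ≤ (a * s - b * t) ^ 2 / (s * t) := by positivity
  linarith

-- The truncated index `k - 1` only matters at `k = 0`, where `W` vanishes.
lemma sum_sq_mul_two_sub_le_sum_sq_sub {W φ : ℕ → ℝ} {n : ℕ} (h0 : W 0 = 0) (hn : W n = 0)
    (hφ : ∀ k ≤ n, 0 ≤ φ k) (hφW : ∀ k ≤ n, φ k = 0 → W k = 0) :
    ∑ k ∈ range n, W k ^ 2 * (2 - (φ (k - 1) + φ (k + 1)) / φ k) ≤
      ∑ k ∈ range n, (W (k + 1) - W k) ^ 2 := by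
  let F : ℕ → ℝ := fun k ↦ W k ^ 2 * (1 - φ (k - 1) / φ k)
  let G : ℕ → ℝ := fun k ↦ W k ^ 2 * (1 - φ (k + 1) / φ k)
  have hshift : ∑ k ∈ range n, F k = ∑ k ∈ range n, F (k + 1) := by
    have := sum_range_sub F n
    simp only [F, h0, hn, sum_sub_distrib] at this
    linarith
  calc ∑ k ∈ range n, W k ^ 2 * (2 - (φ (k - 1) + φ (k + 1)) / φ k)
      = ∑ k ∈ range n, (F k + G k) := sum_congr rfl fun k _ ↦ by ring
    _ = ∑ k ∈ range n, (F (k + 1) + G k) := by rw [sum_add_distrib, sum_add_distrib, hshift]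
    _ ≤ _ := sum_le_sum fun k hk ↦ by
      have hkn := mem_range.1 hk
      exact picone_two_point (hφ k hkn.le) (hφ (k + 1) hkn) (hφW (k + 1) hkn) (hφW k hkn.le)

lemma sum_sq_le_sum_sq_sub {W : ℕ → ℝ} {n : ℕ} (h0 : W 0 = 0) (hn : W n = 0) :
    ∑ k ∈ range n, W k ^ 2 ≤ (n : ℝ) ^ 2 / 8 * ∑ k ∈ range n, (W (k + 1) - W k) ^ 2 := by
  -- The parabola `k (n - k)` has second difference `-2` and is at most `n ^ 2 / 4`.
  let φ : ℕ → ℝ := fun k ↦ k * (n - k)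
  have hφ : ∀ k ≤ n, 0 ≤ φ k := fun k hk ↦
    mul_nonneg k.cast_nonneg (sub_nonneg.2 (mod_cast hk))
  have hφW : ∀ k ≤ n, φ k = 0 → W k = 0 := fun k _ h ↦ by
    rcases mul_eq_zero.1 h with hk | hk
    · rwa [show k = 0 from mod_cast hk]
    · rwa [show k = n from mod_cast (sub_eq_zero.1 hk).symm]
  have hterm : ∀ k ∈ range n,
      W k ^ 2 ≤ (n : ℝ) ^ 2 / 8 * (W k ^ 2 * (2 - (φ (k - 1) + φ (k + 1)) / φ k)) := by
    rintro (_ | k) hk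
    · simp [h0]
    have hpos : 0 < φ (k + 1) := mul_pos (by positivity) (sub_pos.2 (mod_cast mem_range.1 hk))
    have hmax : φ (k + 1) ≤ (n : ℝ) ^ 2 / 4 := by
      simp only [φ]
      nlinarith [sq_nonneg ((n : ℝ) - 2 * (k + 1 : ℕ))]
    have hlaplace : 2 - (φ (k + 1 - 1) + φ (k + 1 + 1)) / φ (k + 1) = 2 / φ (k + 1) := by
      field_simp
      simp only [φ, Nat.add_sub_cancel]
      push_cast
      ring
    calc W (k + 1) ^ 2 = φ (k + 1) / 2 * (W (k + 1) ^ 2 * (2 / φ (k + 1))) := by field_simp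
      _ ≤ (n : ℝ) ^ 2 / 8 * (W (k + 1) ^ 2 * (2 / φ (k + 1))) :=
        mul_le_mul_of_nonneg_right (by linarith) (by positivity)
      _ = _ := by rw [hlaplace]
  calc ∑ k ∈ range n, W k ^ 2 ≤ _ := sum_le_sum hterm
    _ ≤ (n : ℝ) ^ 2 / 8 * ∑ k ∈ range n, (W (k + 1) - W k) ^ 2 := by
      rw [← mul_sum]
      exact mul_le_mul_of_nonneg_left (sum_sq_mul_two_sub_le_sum_sq_sub h0 hn hφ hφW)
        (by positivity)

lemma sum_sq_sub_le_two_mul_sum_sq {D : ℕ → ℝ} {n : ℕ} (h0 : D 0 = 0) (hn : D n = 0)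
    (hD : ∀ k, D k ≤ 0) :
    ∑ k ∈ range n, (D (k + 1) - D k) ^ 2 ≤ 2 * ∑ k ∈ range n, D k ^ 2 := by
  have hshift : ∑ k ∈ range n, D (k + 1) ^ 2 = ∑ k ∈ range n, D k ^ 2 := by
    have := sum_range_sub (fun k ↦ D k ^ 2) n
    rw [sum_sub_distrib, h0, hn] at this
    linarith
  calc ∑ k ∈ range n, (D (k + 1) - D k) ^ 2 ≤ ∑ k ∈ range n, (D (k + 1) ^ 2 + D k ^ 2) :=
        sum_le_sum fun k _ ↦ by
          nlinarith [mul_nonneg_of_nonpos_of_nonpos (hD (k + 1)) (hD k)]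
    _ = 2 * ∑ k ∈ range n, D k ^ 2 := by rw [sum_add_distrib, hshift, two_mul]

lemma sum_sum_sq_sub_le_sum_sq_sum_sub {ι : Type*} [Fintype ι] {D : ι → ℕ → ℝ} {n : ℕ}
    (h0 : ∀ i, D i 0 = 0) (hn : ∀ i, D i n = 0) (hD : ∀ i k, D i k ≤ 0) :
    ∑ i, ∑ k ∈ range n, (D i (k + 1) - D i k) ^ 2 ≤
      (n : ℝ) ^ 2 / 4 * ∑ k ∈ range n, (∑ i, (D i (k + 1) - D i k)) ^ 2 := by
  have hcancel : ∀ k, ∑ i, D i k ^ 2 ≤ (∑ i, D i k) ^ 2 := fun k ↦ by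
    simpa using sum_sq_le_sq_sum_of_nonneg (s := univ) fun i _ ↦ neg_nonneg.2 (hD i k)
  have hwirtinger := sum_sq_le_sum_sq_sub (W := fun k ↦ ∑ i, D i k) (n := n)
    (by simp [h0]) (by simp [hn])
  calc ∑ i, ∑ k ∈ range n, (D i (k + 1) - D i k) ^ 2
      ≤ ∑ i, 2 * ∑ k ∈ range n, D i k ^ 2 :=
        sum_le_sum fun i _ ↦ sum_sq_sub_le_two_mul_sum_sq (h0 i) (hn i) (hD i)
    _ = 2 * ∑ k ∈ range n, ∑ i, D i k ^ 2 := by rw [← mul_sum, sum_comm]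
    _ ≤ 2 * ∑ k ∈ range n, (∑ i, D i k) ^ 2 := by
      gcongr with k
      exact hcancel k
    _ ≤ _ := by
      simp only [sum_sub_distrib]
      linarith

lemma sum_sum_sq_le_of_prefix_sum_nonpos {ι V : Type*} [Fintype ι] [Fintype V] {n : ℕ}
    (e : V ≃ Fin n) {d : ι → V → ℝ} (hsum : ∀ i, ∑ v, d i v = 0)
    (hprefix : ∀ i (k : ℕ), ∑ v with e v < k, d i v ≤ 0) :
    ∑ i, ∑ v, d i v ^ 2 ≤ (n : ℝ) ^ 2 / 4 * ∑ v, (∑ i, d i v) ^ 2 := by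
  classical
  let D : ι → ℕ → ℝ := fun i k ↦ ∑ v with e v < k, d i v
  have hdiff : ∀ i v, D i (e v + 1) - D i (e v) = d i v := fun i v ↦ by
    have hinsert : univ.filter (fun w ↦ (e w : ℕ) < e v + 1) =
        insert v (univ.filter fun w ↦ (e w : ℕ) < e v) := by
      ext w
      rw [mem_insert, mem_filter_univ, mem_filter_univ, ← e.apply_eq_iff_eq, Fin.ext_iff]
      lia
    simp only [D]
    rw [hinsert, sum_insert (by simp), add_sub_cancel_right]
  have hreindex : ∀ F : ℕ → ℝ, ∑ v, F (e v) = ∑ k ∈ range n, F k := fun F ↦ by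
    rw [e.sum_comp (fun k : Fin n ↦ F k), Fin.sum_univ_eq_sum_range]
  have hbound := sum_sum_sq_sub_le_sum_sq_sum_sub (D := D) (n := n) (fun i ↦ by simp [D])
    (fun i ↦ by simp [D, hsum]) hprefix
  simpa only [← hreindex, hdiff] using hbound

lemma exists_equiv_fin_lt_of_acyclic {V : Type*} [Fintype V] {R : V → V → Prop}
    (hR : ∀ v, ¬ Relation.TransGen R v v) :
    ∃ e : V ≃ Fin (Fintype.card V), ∀ v u, R v u → e v < e u := by
  have : IsStrictOrder V (Relation.TransGen R) := { irrefl := hR, trans := fun _ _ _ ↦ .trans }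
  let _ : PartialOrder V := partialOrderOfSO (Relation.TransGen R)
  let _ : Fintype (LinearExtension V) := inferInstanceAs (Fintype V)
  let o := Fintype.orderIsoFinOfCardEq (LinearExtension V) rfl
  refine ⟨o.symm.toEquiv, fun v u hvu ↦ o.symm.lt_iff_lt.2 ?_⟩
  have hlt : v < u := Relation.TransGen.single hvu
  exact (toLinearExtension.monotone hlt.le).lt_of_ne hlt.ne

/-- The feasible directions of `C` at `z`, as the cone spanned by `C - z`. -/
def feasibleCone {X : Type*} [AddCommGroup X] [Module ℝ X] (C : Set X) (z : X) :
    ConvexCone ℝ X :=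
  ConvexCone.hull ℝ ((z + ·) ⁻¹' C)

lemma mem_feasibleCone {X : Type*} [AddCommGroup X] [Module ℝ X] {C : Set X}
    (hC : Convex ℝ C) {z g : X} :
    g ∈ feasibleCone C z ↔ ∃ ε > (0 : ℝ), z + ε • g ∈ C := by
  rw [feasibleCone, ConvexCone.mem_hull_of_convex (hC.translate_preimage_right z)]
  constructor
  · rintro ⟨r, hr, y, hy, rfl⟩
    exact ⟨r⁻¹, inv_pos.2 hr, by simpa [smul_smul, hr.ne'] using hy⟩
  · rintro ⟨ε, hε, hg⟩
    exact ⟨ε⁻¹, inv_pos.2 hε, ε • g, hg, by simp [smul_smul, hε.ne']⟩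

lemma map_nonneg_of_mem_feasibleCone {X : Type*} [AddCommGroup X] [Module ℝ X] {C : Set X}
    (hC : Convex ℝ C) {z g : X} {φ : X →ₗ[ℝ] ℝ} (hφ : ∀ w ∈ C, 0 ≤ φ (w - z))
    (hg : g ∈ feasibleCone C z) : 0 ≤ φ g := by
  obtain ⟨ε, hε, hmem⟩ := (mem_feasibleCone hC).1 hg
  have := hφ _ hmem
  rw [add_sub_cancel_left, map_smul, smul_eq_mul] at this
  exact (mul_nonneg_iff_of_pos_left hε).1 this

lemma exists_forall_sub_dotProduct_sub_nonneg {α : Type*} [Fintype α] {K : Set (α → ℝ)}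
    (hne : K.Nonempty) (hclosed : IsClosed K) (hconv : Convex ℝ K) (x : α → ℝ) :
    ∃ z ∈ K, ∀ w ∈ K, 0 ≤ (z - x) ⬝ᵥ (w - z) := by
  let toFun := EuclideanSpace.equiv α ℝ
  have hconv' : Convex ℝ (toFun ⁻¹' K) := hconv.linear_preimage toFun.toLinearMap
  obtain ⟨z, hz, hmin⟩ := exists_norm_eq_iInf_of_complete_convex
    (hne.preimage toFun.surjective) (hclosed.preimage toFun.continuous).isComplete hconv'
    (WithLp.toLp 2 x)
  refine ⟨toFun z, hz, fun w hw ↦ ?_⟩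
  have hinner := (norm_eq_iInf_iff_real_inner_le_zero hconv' hz).1 hmin (WithLp.toLp 2 w) hw
  have hdot : (toFun z - x) ⬝ᵥ (w - toFun z) =
      -inner ℝ (WithLp.toLp 2 x - z) (WithLp.toLp 2 w - z) := by
    rw [← inner_neg_left, neg_sub, EuclideanSpace.inner_eq_star_dotProduct, dotProduct_comm]
    rfl
  exact hdot ▸ neg_nonneg.2 hinner

section BasePolytope

variable {V : Type*} [Fintype V] [DecidableEq V] {g : Finset V → ℝ} {x z : V → ℝ}

/-- The set `S` is tight for `z`: the constraint `z(S) ≤ g(S)` holds with equality. -/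
def TightSet (g : Finset V → ℝ) (z : V → ℝ) (S : Finset V) : Prop :=
  ∑ v ∈ S, z v = g S

/-- No set tight for `z` contains `v` but not `u`, so that a little mass can be moved from `u`
to `v` without leaving the base polytope. -/
def Exchangeable (g : Finset V → ℝ) (z : V → ℝ) (u v : V) : Prop :=
  ∀ S, TightSet g z S → v ∈ S → u ∈ S

lemma TightSet.union_inter (hg : Submodular g) (hz : InBasePolytope g z) {S T : Finset V}
    (hS : TightSet g z S) (hT : TightSet g z T) :
    TightSet g z (S ∪ T) ∧ TightSet g z (S ∩ T) := by
  unfold TightSet at *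
  have hmodular := sum_union_inter (s₁ := S) (s₂ := T) (f := z)
  have hsub := hg S T
  have hunion := hz.1 (S ∪ T)
  have hinter := hz.1 (S ∩ T)
  constructor <;> linarith

lemma exists_tightSet_separating (hg : Submodular g) (g0 : g ∅ = 0) (hz : InBasePolytope g z)
    {U W : Finset V} (h : ∀ v ∈ W, ∀ u ∈ U, ¬ Exchangeable g z u v) :
    ∃ S, TightSet g z S ∧ W ⊆ S ∧ Disjoint U S := by
  simp only [Exchangeable, not_forall, exists_prop] at h
  choose! S htight hmem hnot using h
  refine ⟨W.sup fun v ↦ U.inf (S v), ?_, fun v hv ↦ ?_, disjoint_left.2 fun u hu hmemS ↦ ?_⟩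
  · refine sup_induction (by simp [TightSet, g0]) (fun _ h₁ _ h₂ ↦ (h₁.union_inter hg hz h₂).1)
      fun v hv ↦ ?_
    exact inf_induction hz.2 (fun _ h₁ _ h₂ ↦ (h₁.union_inter hg hz h₂).2) (htight v hv)
  · exact mem_sup.2 ⟨v, hv, singleton_subset_iff.1 <|
      Finset.le_inf fun u hu ↦ singleton_subset_iff.2 (hmem v hv u hu)⟩
  · obtain ⟨v, hv, huv⟩ := mem_sup.1 hmemS
    exact hnot v hv u hu (Finset.inf_le (f := S v) hu huv)

lemma exists_exchangeable_of_sum_lt (hg : Submodular g) (g0 : g ∅ = 0)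
    (hx : InBasePolytope g x) (hz : InBasePolytope g z) {L : Finset V}
    (hL : ∑ v ∈ L, x v < ∑ v ∈ L, z v) :
    ∃ u ∈ L, ∃ v ∉ L, x u < z u ∧ z v < x v ∧ Exchangeable g z u v := by
  by_contra! hcon
  obtain ⟨S, hS, hWS, hUS⟩ := exists_tightSet_separating hg g0 hz
    (U := L.filter fun u ↦ x u < z u) (W := Lᶜ.filter fun v ↦ z v < x v) <| by
      intro v hv u hu
      rw [mem_filter] at hv hu
      exact hcon u hu.1 v (mem_compl.1 hv.1) hu.2 hv.2
  have hpointwise : ∀ v, (if v ∈ L then z v - x v else 0) ≤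
      (z v - x v) - if v ∈ S then z v - x v else 0 := fun v ↦ by
    have hin : v ∈ L → v ∈ S → z v ≤ x v := fun hvL hvS ↦
      not_lt.1 fun hlt ↦ disjoint_right.1 hUS hvS (mem_filter.2 ⟨hvL, hlt⟩)
    have hout : v ∉ L → v ∉ S → x v ≤ z v := fun hvL hvS ↦
      not_lt.1 fun hlt ↦ hvS (hWS (mem_filter.2 ⟨mem_compl.2 hvL, hlt⟩))
    split_ifs with hvL hvS hvS
    · linarith [hin hvL hvS]
    · simp
    · simp
    · linarith [hout hvL hvS]
  have hsum := sum_le_sum fun v (_ : v ∈ univ) ↦ hpointwise v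
  simp only [sum_sub_distrib, sum_ite_mem, univ_inter] at hsum
  have hS' : ∑ v ∈ S, z v = g S := hS
  linarith [hx.1 S, hx.2, hz.2]

lemma Exchangeable.exists_add_smul_single_sub_single {u v : V} (h : Exchangeable g z u v)
    (hz : InBasePolytope g z) :
    ∃ ε > (0 : ℝ), InBasePolytope g (z + ε • (Pi.single v 1 - Pi.single u 1)) := by
  have hsum : ∀ (ε : ℝ) (S : Finset V),
      ∑ w ∈ S, (z + ε • (Pi.single v 1 - Pi.single u 1) : V → ℝ) w =
        ∑ w ∈ S, z w + ε * ((if v ∈ S then 1 else 0) - if u ∈ S then 1 else 0) := fun ε S ↦ by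
    simp [sum_add_distrib, ← mul_sum, sum_sub_distrib]
  have hsmall : ∀ᶠ ε in 𝓝[>] (0 : ℝ), ∀ S, ¬ TightSet g z S → ε ≤ g S - ∑ w ∈ S, z w := by
    refine Filter.eventually_all.2 fun S ↦ ?_
    by_cases hS : TightSet g z S
    · simp [hS]
    have hslack : 0 < g S - ∑ w ∈ S, z w := sub_pos.2 ((hz.1 S).lt_of_ne hS)
    filter_upwards [nhdsWithin_le_nhds (eventually_le_nhds hslack)] with ε hε _ using hε
  obtain ⟨ε, hε, hpos : 0 < ε⟩ := (hsmall.and self_mem_nhdsWithin).exists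
  refine ⟨ε, hpos, fun S ↦ ?_, ?_⟩
  · rw [hsum]
    by_cases hS : TightSet g z S
    · have := hz.1 S
      have := h S hS
      split_ifs <;> first | linarith | tauto
    · have := hε S hS
      split_ifs <;> linarith
  · rw [hsum]
    simpa using hz.2

lemma InBasePolytope.mem_Icc (hx : InBasePolytope g x) :
    x ∈ Set.Icc (fun v ↦ g univ - g (univ.erase v)) fun v ↦ g {v} := by
  refine ⟨fun v ↦ ?_, fun v ↦ by simpa using hx.1 {v}⟩
  have hsum := add_sum_erase univ x (mem_univ v)
  linarith [hx.1 (univ.erase v), hx.2]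

lemma exists_inBasePolytope (hg : Submodular g) (g0 : g ∅ = 0) : ∃ x, InBasePolytope g x := by
  suffices h : ∀ T, ∃ x : V → ℝ, (∀ S ⊆ T, ∑ v ∈ S, x v ≤ g S) ∧ ∑ v ∈ T, x v = g T by
    obtain ⟨x, hle, heq⟩ := h univ
    exact ⟨x, fun S ↦ hle S (subset_univ S), heq⟩
  intro T
  induction T using Finset.induction_on with
  | empty => exact ⟨0, by simp [g0]⟩
  | insert a T ha ih =>
    obtain ⟨x, hle, heq⟩ := ih
    -- Greedy step: the new coordinate is the marginal value of `a` over `T`.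
    let x' := Function.update x a (g (insert a T) - g T)
    have hx' : ∀ S, a ∉ S → ∑ v ∈ S, x' v = ∑ v ∈ S, x v := fun S haS ↦
      sum_update_of_notMem haS _ _
    have hx'a : x' a = g (insert a T) - g T := Function.update_self ..
    refine ⟨x', fun S hS ↦ ?_, by rw [sum_insert ha, hx' T ha, hx'a, heq, sub_add_cancel]⟩
    rw [subset_insert_iff] at hS
    by_cases haS : a ∈ S
    · have hunion : S ∪ T = insert a T := by grind
      have hinter : S ∩ T = S.erase a := by grind
      have hsub := hg S T
      rw [hunion, hinter] at hsub
      rw [← add_sum_erase S x' haS, hx' _ (notMem_erase a S), hx'a]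
      linarith [hle _ hS]
    · rw [erase_eq_of_notMem haS] at hS
      exact (hx' S haS).trans_le (hle S hS)

end BasePolytope

lemma convex_setOf_inBasePolytope {V : Type*} [Fintype V] (g : Finset V → ℝ) :
    Convex ℝ {x | InBasePolytope g x} := by
  intro x hx y hy a b ha hb hab
  have hsum : ∀ S : Finset V,
      ∑ v ∈ S, (a • x + b • y) v = a * ∑ v ∈ S, x v + b * ∑ v ∈ S, y v := fun S ↦ by
    simp [sum_add_distrib, mul_sum]
  have hconv : ∀ c : ℝ, a * c + b * c = c := fun c ↦ by rw [← add_mul, hab, one_mul]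
  refine ⟨fun S ↦ ?_, ?_⟩
  · rw [hsum, ← hconv (g S)]
    gcongr
    exacts [hx.1 S, hy.1 S]
  · rw [hsum, hx.2, hy.2, hconv]

lemma isClosed_setOf_inBasePolytope {V : Type*} [Fintype V] (g : Finset V → ℝ) :
    IsClosed {x | InBasePolytope g x} := by
  have hle : IsClosed {x : V → ℝ | ∀ S : Finset V, ∑ v ∈ S, x v ≤ g S} := by
    rw [Set.ofPred_forall]
    exact isClosed_iInter fun S ↦ isClosed_le (by fun_prop) (by fun_prop)
  exact hle.inter (isClosed_eq (by fun_prop) (by fun_prop))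

section BlockSum

variable {ι V : Type*} [Fintype ι] {s : V → ℝ}

/-- The linear map `A` summing the blocks `y (i, ·)` of a vector `y`. -/
def blockSum : (ι × V → ℝ) →ₗ[ℝ] V → ℝ where
  toFun y v := ∑ i, y (i, v)
  map_add' _ _ := funext fun _ ↦ sum_add_distrib
  map_smul' _ _ := funext fun _ ↦ (mul_sum ..).symm

lemma blockSum_apply (y : ι × V → ℝ) (v : V) : blockSum y v = ∑ i, y (i, v) := rfl

lemma blockSum_single [DecidableEq ι] [DecidableEq V] (i : ι) (v : V) :
    blockSum (Pi.single (i, v) 1) = Pi.single v 1 := by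
  ext w
  simp [blockSum_apply, Pi.single_apply, ite_and]

lemma continuous_blockSum : Continuous (blockSum : (ι × V → ℝ) → V → ℝ) :=
  continuous_pi fun v ↦ continuous_finsetSum univ fun i _ ↦ continuous_apply (i, v)

/-- The affine subspace `𝒜'` of vectors whose blocks sum to `s`, written in coordinates. -/
def sumFiber (ι : Type*) [Fintype ι] (s : V → ℝ) : Set (ι × V → ℝ) :=
  {a | ∀ v, ∑ i, a (i, v) = s v}

lemma mem_sumFiber {a : ι × V → ℝ} : a ∈ sumFiber ι s ↔ blockSum a = s :=
  funext_iff.symm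

lemma sumFiber_eq_preimage : sumFiber ι s = blockSum ⁻¹' {s} :=
  Set.ext fun _ ↦ mem_sumFiber

lemma convex_sumFiber (s : V → ℝ) : Convex ℝ (sumFiber ι s) := by
  rw [sumFiber_eq_preimage]
  exact (convex_singleton s).linear_preimage blockSum

lemma isClosed_sumFiber (s : V → ℝ) : IsClosed (sumFiber ι s) := by
  rw [sumFiber_eq_preimage]
  exact isClosed_singleton.preimage continuous_blockSum

lemma sum_blockSum_sq_le [Fintype V] (y : ι × V → ℝ) :
    ∑ v, blockSum y v ^ 2 ≤ Fintype.card ι * ∑ p, y p ^ 2 := by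
  rw [Fintype.sum_prod_type_right, mul_sum]
  exact sum_le_sum fun v _ ↦ sq_sum_le_card_mul_sum_sq

end BlockSum

section ProdBasePolytope

variable {ι V : Type*} [Fintype V] {f : ι → Finset V → ℝ} {x z : ι × V → ℝ}

/-- The product `𝒫` of the base polytopes of the `f i`. -/
def prodBasePolytope (f : ι → Finset V → ℝ) : Set (ι × V → ℝ) :=
  {y | ∀ i, InBasePolytope (f i) fun v ↦ y (i, v)}

lemma convex_prodBasePolytope (f : ι → Finset V → ℝ) : Convex ℝ (prodBasePolytope f) :=
  fun _ hx _ hy _ _ ha hb hab i ↦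
    convex_setOf_inBasePolytope (f i) (hx i) (hy i) ha hb hab

lemma isClosed_prodBasePolytope (f : ι → Finset V → ℝ) : IsClosed (prodBasePolytope f) := by
  rw [prodBasePolytope, Set.ofPred_forall]
  exact isClosed_iInter fun i ↦ (isClosed_setOf_inBasePolytope (f i)).preimage (by fun_prop)

lemma isCompact_prodBasePolytope (f : ι → Finset V → ℝ) : IsCompact (prodBasePolytope f) := by
  classical
  refine isCompact_Icc.of_isClosed_subset (isClosed_prodBasePolytope f)
    (s := Set.Icc (fun p ↦ f p.1 univ - f p.1 (univ.erase p.2)) fun p ↦ f p.1 {p.2}) ?_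
  exact fun y hy ↦ ⟨fun p ↦ (hy p.1).mem_Icc.1 p.2, fun p ↦ (hy p.1).mem_Icc.2 p.2⟩

/-- Arc `v → u`: some block has a deficit of `z` against `x` at `v` and an excess at `u`, and can
move mass from `u` to `v`. -/
def ExchangeArc (f : ι → Finset V → ℝ) (x z : ι × V → ℝ) (v u : V) : Prop :=
  ∃ i, z (i, v) < x (i, v) ∧ x (i, u) < z (i, u) ∧ Exchangeable (f i) (fun w ↦ z (i, w)) u v

variable [DecidableEq V]

lemma prodBasePolytope_nonempty (hsub : ∀ i, Submodular (f i)) (h0 : ∀ i, f i ∅ = 0) :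
    (prodBasePolytope f).Nonempty := by
  choose x hx using fun i ↦ exists_inBasePolytope (hsub i) (h0 i)
  exact ⟨fun p ↦ x p.1 p.2, hx⟩

lemma Exchangeable.single_sub_single_mem_feasibleCone [DecidableEq ι] {i : ι} {u v : V}
    (h : Exchangeable (f i) (fun w ↦ z (i, w)) u v) (hz : z ∈ prodBasePolytope f) :
    Pi.single (i, v) 1 - Pi.single (i, u) 1 ∈ feasibleCone (prodBasePolytope f) z := by
  obtain ⟨ε, hε, hmem⟩ := h.exists_add_smul_single_sub_single (hz i)
  refine (mem_feasibleCone (convex_prodBasePolytope f)).2 ⟨ε, hε, fun j ↦ ?_⟩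
  rcases eq_or_ne j i with rfl | hj
  · convert hmem using 2 with w
    simp [Pi.single_apply]
  · convert hz j using 2 with w
    simp [hj]

lemma sum_filter_lt_sub_nonpos {n : ℕ} (hsub : ∀ i, Submodular (f i)) (h0 : ∀ i, f i ∅ = 0)
    (hx : x ∈ prodBasePolytope f) (hz : z ∈ prodBasePolytope f) {e : V ≃ Fin n}
    (he : ∀ v u, ExchangeArc f x z v u → e v < e u) (i : ι) (k : ℕ) :
    ∑ v with e v < k, (z (i, v) - x (i, v)) ≤ 0 := by
  rw [sum_sub_distrib]
  by_contra! hpos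
  obtain ⟨u, hu, v, hv, hxu, hzv, hexch⟩ :=
    exists_exchangeable_of_sum_lt (hsub i) (h0 i) (hx i) (hz i) (sub_pos.1 hpos)
  rw [mem_filter_univ] at hu hv
  exact hv ((Fin.lt_def.1 (he v u ⟨i, hzv, hxu, hexch⟩)).trans hu)

end ProdBasePolytope

section Decomposition

variable {ι V : Type*} [Fintype ι] [Fintype V] {f : ι → Finset V → ℝ} {s : V → ℝ}
  {x z : ι × V → ℝ}

lemma ExchangeArc.exists_descent [DecidableEq V] {v u : V} (h : ExchangeArc f x z v u)
    (hz : z ∈ prodBasePolytope f) :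
    ∃ g ∈ feasibleCone (prodBasePolytope f) z,
      blockSum g = Pi.single v 1 - Pi.single u 1 ∧ (z - x) ⬝ᵥ g < 0 := by
  classical
  obtain ⟨i, hv, hu, hexch⟩ := h
  refine ⟨_, hexch.single_sub_single_mem_feasibleCone hz, ?_, ?_⟩
  · rw [map_sub, blockSum_single, blockSum_single]
  · rw [dotProduct_sub, dotProduct_single_one, dotProduct_single_one, Pi.sub_apply, Pi.sub_apply]
    linarith

lemma exists_descent_of_transGen [DecidableEq V] {v u : V}
    (h : Relation.TransGen (ExchangeArc f x z) v u) (hz : z ∈ prodBasePolytope f) :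
    ∃ g ∈ feasibleCone (prodBasePolytope f) z,
      blockSum g = Pi.single v 1 - Pi.single u 1 ∧ (z - x) ⬝ᵥ g < 0 := by
  induction h with
  | single harc => exact harc.exists_descent hz
  | tail _ harc ih =>
    obtain ⟨g₁, hg₁, hsum₁, hneg₁⟩ := ih
    obtain ⟨g₂, hg₂, hsum₂, hneg₂⟩ := harc.exists_descent hz
    refine ⟨g₁ + g₂, add_mem hg₁ hg₂, ?_, ?_⟩
    · rw [map_add, hsum₁, hsum₂, sub_add_sub_cancel]
    · rw [dotProduct_add]
      exact add_neg hneg₁ hneg₂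

lemma not_transGen_exchangeArc_self (hz : z ∈ prodBasePolytope f ∩ sumFiber ι s)
    (hmin : ∀ w ∈ prodBasePolytope f ∩ sumFiber ι s, 0 ≤ (z - x) ⬝ᵥ (w - z)) (v : V) :
    ¬ Relation.TransGen (ExchangeArc f x z) v v := by
  classical
  intro hcycle
  obtain ⟨g, hg, hsum, hneg⟩ := exists_descent_of_transGen hcycle hz.1
  obtain ⟨ε, hε, hmem⟩ := (mem_feasibleCone (convex_prodBasePolytope f)).1 hg
  have hfiber : z + ε • g ∈ sumFiber ι s := by
    rw [mem_sumFiber, map_add, map_smul, hsum, sub_self, smul_zero, add_zero,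
      mem_sumFiber.1 hz.2]
  have hnonneg := hmin _ ⟨hmem, hfiber⟩
  rw [add_sub_cancel_left, dotProduct_smul, smul_eq_mul] at hnonneg
  exact (mul_neg_of_pos_of_neg hε hneg).not_ge hnonneg

variable [DecidableEq V]

lemma exists_sum_sq_sub_le (hsub : ∀ i, Submodular (f i)) (h0 : ∀ i, f i ∅ = 0)
    (hne : (prodBasePolytope f ∩ sumFiber ι s).Nonempty) (hx : x ∈ prodBasePolytope f) :
    ∃ z ∈ prodBasePolytope f ∩ sumFiber ι s, ∑ p, (z - x) p ^ 2 ≤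
      (Fintype.card V : ℝ) ^ 2 / 4 * ∑ v, blockSum (z - x) v ^ 2 := by
  obtain ⟨z, hz, hmin⟩ := exists_forall_sub_dotProduct_sub_nonneg hne
    ((isClosed_prodBasePolytope f).inter (isClosed_sumFiber s))
    ((convex_prodBasePolytope f).inter (convex_sumFiber s)) x
  obtain ⟨e, he⟩ := exists_equiv_fin_lt_of_acyclic (not_transGen_exchangeArc_self hz hmin)
  refine ⟨z, hz, ?_⟩
  rw [Fintype.sum_prod_type]
  refine sum_sum_sq_le_of_prefix_sum_nonpos e (d := fun i v ↦ (z - x) (i, v)) (fun i ↦ ?_)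
    (sum_filter_lt_sub_nonpos hsub h0 hx hz.1 he)
  simp only [Pi.sub_apply]
  rw [sum_sub_distrib, (hz.1 i).2, (hx i).2, sub_self]

lemma exists_forall_not_exchangeable (hsub : ∀ i, Submodular (f i)) (h0 : ∀ i, f i ∅ = 0)
    (s : V → ℝ) :
    ∃ y ∈ prodBasePolytope f, ∀ v u, blockSum y v < s v → s u ≤ blockSum y u →
      ∀ i, ¬ Exchangeable (f i) (fun w ↦ y (i, w)) u v := by
  classical
  obtain ⟨_, ⟨y, hy, rfl⟩, hmin⟩ := exists_forall_sub_dotProduct_sub_nonneg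
    ((prodBasePolytope_nonempty hsub h0).image blockSum)
    ((isCompact_prodBasePolytope f).image continuous_blockSum).isClosed
    ((convex_prodBasePolytope f).linear_image blockSum) s
  refine ⟨y, hy, fun v u hv hu i hexch ↦ ?_⟩
  have hdot : 0 ≤ (blockSum y - s) ⬝ᵥ blockSum (Pi.single (i, v) 1 - Pi.single (i, u) 1) :=
    map_nonneg_of_mem_feasibleCone (convex_prodBasePolytope f)
      (φ := dotProductBilin ℝ ℝ (blockSum y - s) ∘ₗ blockSum)
      (fun w hw ↦ by
        have := hmin _ ⟨w, hw, rfl⟩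
        rwa [← map_sub] at this)
      (hexch.single_sub_single_mem_feasibleCone hy)
  rw [map_sub, blockSum_single, blockSum_single, dotProduct_sub, dotProduct_single_one,
    dotProduct_single_one, Pi.sub_apply, Pi.sub_apply] at hdot
  linarith

lemma prodBasePolytope_inter_sumFiber_nonempty (hsub : ∀ i, Submodular (f i))
    (h0 : ∀ i, f i ∅ = 0) (hs : InBasePolytope (fun S ↦ ∑ i, f i S) s) :
    (prodBasePolytope f ∩ sumFiber ι s).Nonempty := by
  obtain ⟨y, hy, hstuck⟩ := exists_forall_not_exchangeable hsub h0 s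
  let W : Finset V := {v | blockSum y v < s v}
  have htight : ∀ i, TightSet (f i) (fun v ↦ y (i, v)) W := fun i ↦ by
    obtain ⟨S, hS, hWS, hdisj⟩ := exists_tightSet_separating (hsub i) (h0 i) (hy i)
      (U := Wᶜ) (W := W) fun v hv u hu ↦ by
        simp only [W, mem_compl, mem_filter_univ, not_lt] at hv hu
        exact hstuck v u hv hu i
    rwa [hWS.antisymm (by simpa using hdisj.le_compl_left)]
  have hexchange : ∀ T : Finset V, ∑ v ∈ T, blockSum y v = ∑ i, ∑ v ∈ T, y (i, v) := fun T ↦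
    sum_comm
  have hle : ∀ v ∈ univ, s v ≤ blockSum y v := fun v _ ↦ by
    by_contra! hv
    have hlt : ∑ v ∈ W, blockSum y v < ∑ v ∈ W, s v :=
      sum_lt_sum_of_nonempty ⟨v, (mem_filter_univ v).2 hv⟩ fun u hu ↦ (mem_filter_univ u).1 hu
    rw [hexchange, sum_congr rfl fun i _ ↦ htight i] at hlt
    exact hlt.not_ge (hs.1 W)
  have htotal : ∑ v, s v = ∑ v, blockSum y v := by
    rw [hexchange, hs.2]
    exact sum_congr rfl fun i _ ↦ (hy i).2.symm
  exact ⟨y, hy, fun v ↦ ((sum_eq_sum_iff_of_le hle).1 htotal v (mem_univ v)).symm⟩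

end Decomposition

section Distance

lemma le_mul_infDist {X : Type*} [PseudoMetricSpace X] {K : Set X} {x : X} {b c : ℝ}
    (hc : 0 ≤ c) (hK : K.Nonempty) (h : ∀ a ∈ K, b ≤ c * dist x a) :
    b ≤ c * Metric.infDist x K := by
  have := hK.to_subtype
  rw [Metric.infDist_eq_iInf, Real.mul_iInf_of_nonneg hc]
  exact le_ciInf fun a ↦ h a a.2

lemma infDist_le_mul_max_of_infDist_le_mul {X : Type*} [PseudoMetricSpace X] {P A E : Set X}
    {c : ℝ} (hc : 0 ≤ c) (hP : P.Nonempty)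
    (h : ∀ p ∈ P, Metric.infDist p E ≤ c * Metric.infDist p A) {y : X} (hy : y ∈ P ∪ A) :
    Metric.infDist y E ≤ (c + 1) * max (Metric.infDist y P) (Metric.infDist y A) := by
  rcases hy with hyP | hyA
  · calc Metric.infDist y E ≤ c * Metric.infDist y A := h y hyP
      _ ≤ (c + 1) * max (Metric.infDist y P) (Metric.infDist y A) := by
        gcongr
        · exact Metric.infDist_nonneg
        · linarith
        · exact le_max_right ..
  calc Metric.infDist y E ≤ (c + 1) * Metric.infDist y P :=
        le_mul_infDist (by positivity) hP fun p hp ↦ calc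
          Metric.infDist y E ≤ Metric.infDist p E + dist y p :=
            Metric.infDist_le_infDist_add_dist
          _ ≤ c * dist p y + dist y p := by
            gcongr
            exact (h p hp).trans <| by
              gcongr
              exact Metric.infDist_le_dist_of_mem hyA
          _ = (c + 1) * dist y p := by rw [dist_comm p y, add_one_mul]
    _ ≤ _ := by gcongr; exact le_max_left ..

lemma norm2_sub_eq_dist {α : Type*} [Fintype α] (x y : α → ℝ) :
    norm2 (x - y) = dist (WithLp.toLp 2 x) (WithLp.toLp 2 y) := by
  simp [norm2, EuclideanSpace.dist_eq, Real.dist_eq]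

lemma distSet_eq_infDist {α : Type*} [Fintype α] (y : α → ℝ) (K : Set (α → ℝ)) :
    distSet y K = Metric.infDist (WithLp.toLp 2 y) (WithLp.toLp 2 '' K) := by
  simp only [distSet, norm2_sub_eq_dist, Metric.infDist_eq_iInf, ← sInf_image', Set.image_image]

lemma distSet_nonneg {α : Type*} [Fintype α] (y : α → ℝ) (K : Set (α → ℝ)) :
    0 ≤ distSet y K :=
  distSet_eq_infDist y K ▸ Metric.infDist_nonneg

end Distance

section ConditionNumber

variable {ι V : Type*} [Fintype ι] [Fintype V] [DecidableEq V] {f : ι → Finset V → ℝ}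
  {s : V → ℝ}

lemma exists_norm2_sub_le (hsub : ∀ i, Submodular (f i)) (h0 : ∀ i, f i ∅ = 0)
    (hne : (prodBasePolytope f ∩ sumFiber ι s).Nonempty) {x : ι × V → ℝ}
    (hx : x ∈ prodBasePolytope f) :
    ∃ z ∈ prodBasePolytope f ∩ sumFiber ι s, ∀ a ∈ sumFiber ι s,
      norm2 (x - z) ≤ Fintype.card V * √(Fintype.card ι) / 2 * norm2 (x - a) := by
  obtain ⟨z, hz, hle⟩ := exists_sum_sq_sub_le hsub h0 hne hx
  refine ⟨z, hz, fun a ha ↦ Real.sqrt_le_iff.2 ⟨by unfold norm2; positivity, ?_⟩⟩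
  have hsum : blockSum (z - x) = -blockSum (x - a) := by
    rw [map_sub, map_sub, mem_sumFiber.1 hz.2, mem_sumFiber.1 ha, neg_sub]
  calc ∑ p, (x - z) p ^ 2 = ∑ p, (z - x) p ^ 2 :=
        sum_congr rfl fun p _ ↦ sub_sq_comm (x p) (z p)
    _ ≤ (Fintype.card V : ℝ) ^ 2 / 4 * ∑ v, blockSum (x - a) v ^ 2 := by
        simpa only [hsum, Pi.neg_apply, neg_sq] using hle
    _ ≤ (Fintype.card V : ℝ) ^ 2 / 4 * (Fintype.card ι * ∑ p, (x - a) p ^ 2) := by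
        gcongr
        exact sum_blockSum_sq_le (x - a)
    _ = (Fintype.card V * √(Fintype.card ι) / 2 * norm2 (x - a)) ^ 2 := by
        rw [norm2, mul_pow, div_pow, mul_pow, Real.sq_sqrt (by positivity),
          Real.sq_sqrt (by positivity)]
        ring

lemma distSet_inter_le_mul_distSet_sumFiber (hsub : ∀ i, Submodular (f i))
    (h0 : ∀ i, f i ∅ = 0) (hne : (prodBasePolytope f ∩ sumFiber ι s).Nonempty)
    {x : ι × V → ℝ} (hx : x ∈ prodBasePolytope f) :
    distSet x (prodBasePolytope f ∩ sumFiber ι s) ≤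
      Fintype.card V * √(Fintype.card ι) / 2 * distSet x (sumFiber ι s) := by
  obtain ⟨z, hz, hle⟩ := exists_norm2_sub_le hsub h0 hne hx
  simp only [distSet_eq_infDist, norm2_sub_eq_dist] at hle ⊢
  refine le_mul_infDist (by positivity) (hne.right.image _) ?_
  rintro _ ⟨a, ha, rfl⟩
  exact (Metric.infDist_le_dist_of_mem (Set.mem_image_of_mem _ hz)).trans (hle a ha)

lemma distSet_inter_le_mul_max (hsub : ∀ i, Submodular (f i)) (h0 : ∀ i, f i ∅ = 0)
    (hne : (prodBasePolytope f ∩ sumFiber ι s).Nonempty) {y : ι × V → ℝ}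
    (hy : y ∈ prodBasePolytope f ∪ sumFiber ι s) :
    distSet y (prodBasePolytope f ∩ sumFiber ι s) ≤
      (Fintype.card V * √(Fintype.card ι) / 2 + 1) *
        max (distSet y (prodBasePolytope f)) (distSet y (sumFiber ι s)) := by
  have hregular := fun x ↦ distSet_inter_le_mul_distSet_sumFiber (x := x) hsub h0 hne
  simp only [distSet_eq_infDist] at hregular ⊢
  refine infDist_le_mul_max_of_infDist_le_mul (by positivity) (hne.left.image _) ?_ ?_
  · rintro _ ⟨x, hx, rfl⟩
    exact hregular x hx
  · rw [← Set.image_union]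
    exact Set.mem_image_of_mem _ hy

end ConditionNumber

theorem kappa_star_bound_general {ι V : Type*} [Fintype ι] [Fintype V] [DecidableEq V]
    {f : ι → Finset V → ℝ} (hsub : ∀ i, Submodular (f i)) (h0 : ∀ i, f i ∅ = 0) {s : V → ℝ}
    (hs : InBasePolytope (fun S ↦ ∑ i, f i S) s) :
    (∀ y ∈ (prodBasePolytope f ∪ sumFiber ι s) \ (prodBasePolytope f ∩ sumFiber ι s),
      distSet y (prodBasePolytope f ∩ sumFiber ι s) ≤
        (Fintype.card V * √(Fintype.card ι) / 2 + 1) *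
          max (distSet y (prodBasePolytope f)) (distSet y (sumFiber ι s))) ∧
    sSup {κ : ℝ | ∃ y ∈ (prodBasePolytope f ∪ sumFiber ι s) \
          (prodBasePolytope f ∩ sumFiber ι s),
        κ = distSet y (prodBasePolytope f ∩ sumFiber ι s) /
          max (distSet y (prodBasePolytope f)) (distSet y (sumFiber ι s))} ≤
      Fintype.card V * √(Fintype.card ι) / 2 + 1 := by
  have hbound := fun y ↦ distSet_inter_le_mul_max (y := y) hsub h0
    (prodBasePolytope_inter_sumFiber_nonempty hsub h0 hs)
  refine ⟨fun y hy ↦ hbound y hy.1, Real.sSup_le ?_ (by positivity)⟩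
  rintro _ ⟨y, hy, rfl⟩
  exact div_le_of_le_mul₀ (le_max_of_le_left (distSet_nonneg _ _)) (by positivity)
    (hbound y hy.1)

/-- Theorem 4.1, bound on `κ*`: for every `y ∈ (𝒫 ∪ 𝒜') \ E`,
`d(y, E) ≤ (n√r/2 + 1) · max{d(y, 𝒫), d(y, 𝒜')}`, and consequently
`κ* ≤ n√r/2 + 1`. -/
theorem kappa_star_bound
    {V : Type*} [Fintype V] [DecidableEq V] (r : ℕ)
    (f : Fin r → Finset V → ℝ)
    (hsub : ∀ i, Submodular (f i)) (h0 : ∀ i, f i ∅ = 0)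
    (sstar : V → ℝ)
    (hsB : InBasePolytope (fun S => ∑ i, f i S) sstar)
    (hsMin : ∀ z : V → ℝ, InBasePolytope (fun S => ∑ i, f i S) z →
      ∑ v, sstar v ^ 2 ≤ ∑ v, z v ^ 2)
    (P A' E : Set (Fin r × V → ℝ))
    (hP : P = {y | ∀ i, InBasePolytope (f i) (fun v => y (i, v))})
    (hA' : A' = {a | ∀ v, ∑ i, a (i, v) = sstar v})
    (hE : E = {y ∈ P | ∀ v, ∑ i, y (i, v) = sstar v}) :
    (∀ y ∈ (P ∪ A') \ E,
      distSet y E ≤ ((Fintype.card V : ℝ) * Real.sqrt r / 2 + 1) *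
        max (distSet y P) (distSet y A')) ∧
    sSup {κ : ℝ | ∃ y ∈ (P ∪ A') \ E,
        κ = distSet y E / max (distSet y P) (distSet y A')} ≤
      (Fintype.card V : ℝ) * Real.sqrt r / 2 + 1 := by
  subst hP hA' hE
  have hbound := kappa_star_bound_general hsub h0 hsB
  rwa [Fintype.card_fin] at hbound
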